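/- Let n ≥ 1 and let (f_0,f_1) belong to the Pohozhaev class 𝒫: f_0, f_1 ∈ H^σ(ℝⁿ) for every σ ≥ 0, and limsup_{j→∞} 2^j ( ∫_{ℝⁿ} |ξ|^{4·2^j + 2} |f̂_0(ξ)|² dξ + ∫_{ℝⁿ} |ξ|^{4·2^j} |f̂_1(ξ)|² dξ )^{−1/2^{j+2}} > 0. Then (f_0,f_1) belongs to Manfrin's class ℬ_Δ: there exist a sequence ρ_j > 0 with ρ_j → ∞ and a constant η > 0 such that sup_{j∈ℕ} ∫_{|ξ| ≥ ρ_j} ( |ξ|⁴ |f̂_0(ξ)|² + |ξ|² |f̂_1(ξ)|² ) e^{η ρ_j² / |ξ|} / ρ_j² dξ < ∞. -/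

import Mathlib

open MeasureTheory Filter
open scoped ENNReal NNReal

noncomputable section

/-!
Let `w = |ξ|² |F0|² + |F1|²` and let `M p` be its `p`-th moment. The Pohozhaev condition provides
`δ > 0` with `M p ≤ (p / δ) ^ p` for infinitely many `p`. For such a `p` take `ρ = e p / δ` and
`η = δ / e`, so that `η ρ = p`. Where `|ξ| ≥ ρ`, we have `exp (η ρ² / |ξ|) ≤ e ^ p` and
`(|ξ| / ρ) ^ 2 ≤ (|ξ| / ρ) ^ p`, so the Manfrin integral is at most `(e / ρ) ^ p * M p ≤ 1`.
-/

section Moments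

variable {E V W : Type*} [SeminormedAddCommGroup E] [SeminormedAddCommGroup V]
  [SeminormedAddCommGroup W]

/-- The density on the Fourier side of the wave energy `‖∇f₀‖² + ‖f₁‖²`, where `F0` and `F1` stand
for the Fourier transforms of the data `f₀` and `f₁`. -/
def energyDensity (F0 : E → V) (F1 : E → W) (ξ : E) : ℝ≥0∞ :=
  ‖ξ‖ₑ ^ 2 * ‖F0 ξ‖ₑ ^ 2 + ‖F1 ξ‖ₑ ^ 2

lemma enorm_sq_mul_energyDensity (F0 : E → V) (F1 : E → W) (ξ : E) :
    ‖ξ‖ₑ ^ 2 * energyDensity F0 F1 ξ = ‖ξ‖ₑ ^ 4 * ‖F0 ξ‖ₑ ^ 2 + ‖ξ‖ₑ ^ 2 * ‖F1 ξ‖ₑ ^ 2 := by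
  rw [energyDensity]
  ring

variable [MeasurableSpace E]

/-- The absolute moment of order `p` of the measure with density `w` with respect to `μ`. It is a
lower Lebesgue integral, so that a divergent moment is `⊤`. -/
def normMoment (μ : Measure E) (w : E → ℝ≥0∞) (p : ℕ) : ℝ≥0∞ :=
  ∫⁻ ξ, ‖ξ‖ₑ ^ p * w ξ ∂μ

lemma normMoment_lt_top_of_sobolev {μ : Measure E} {F : E → V} {k : ℕ}
    (hF : ∫⁻ ξ, ENNReal.ofReal ((1 + ‖ξ‖ ^ 2) ^ (k : ℝ)) * ‖F ξ‖ₑ ^ 2 ∂μ < ⊤) :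
    normMoment μ (‖F ·‖ₑ ^ 2) (2 * k) < ⊤ := by
  refine lt_of_le_of_lt (lintegral_mono fun ξ => ?_) hF
  gcongr
  rw [← ofReal_norm, ← ENNReal.ofReal_pow (norm_nonneg ξ), Real.rpow_natCast, pow_mul]
  gcongr
  exact le_add_of_nonneg_left zero_le_one

variable [OpensMeasurableSpace E]

lemma normMoment_energyDensity {μ : Measure E} {F0 : E → V} (hF0 : AEStronglyMeasurable F0 μ)
    (F1 : E → W) (p : ℕ) :
    normMoment μ (energyDensity F0 F1) p =
      normMoment μ (‖F0 ·‖ₑ ^ 2) (p + 2) + normMoment μ (‖F1 ·‖ₑ ^ 2) p := by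
  have hmeas : AEMeasurable (fun ξ => ‖ξ‖ₑ ^ (p + 2) * ‖F0 ξ‖ₑ ^ 2) μ :=
    (measurable_enorm.pow_const _).aemeasurable.mul (hF0.enorm.pow_const _)
  rw [normMoment, normMoment, normMoment, ← lintegral_add_left' hmeas]
  simp only [energyDensity, mul_add, pow_add, mul_assoc]

lemma integral_norm_pow_mul_norm_sq {μ : Measure E} {F : E → V} (hF : AEStronglyMeasurable F μ)
    (p : ℕ) :
    ∫ ξ, ‖ξ‖ ^ p * ‖F ξ‖ ^ 2 ∂μ = (normMoment μ (‖F ·‖ₑ ^ 2) p).toReal := by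
  have hmeas : AEMeasurable (fun ξ => ‖ξ‖ ^ p * ‖F ξ‖ ^ 2) μ :=
    (continuous_norm.measurable.pow_const _).aemeasurable.mul (hF.norm.aemeasurable.pow_const _)
  rw [integral_eq_lintegral_of_nonneg_ae (ae_of_all _ fun ξ => by positivity)
    hmeas.aestronglyMeasurable, normMoment]
  congr! 3 with ξ
  rw [ENNReal.ofReal_mul (by positivity), ENNReal.ofReal_pow (norm_nonneg _),
    ENNReal.ofReal_pow (norm_nonneg _), ofReal_norm, ofReal_norm]

-- Only an inequality: for a vanishing moment and `s < 0` the left side is the junk value `0`.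
lemma ofReal_add_integral_rpow_le {μ : Measure E} {F0 : E → V} {F1 : E → W}
    (hF0 : AEStronglyMeasurable F0 μ) (hF1 : AEStronglyMeasurable F1 μ) {p : ℕ}
    (hfin0 : normMoment μ (‖F0 ·‖ₑ ^ 2) (p + 2) < ⊤) (hfin1 : normMoment μ (‖F1 ·‖ₑ ^ 2) p < ⊤)
    (s : ℝ) :
    ENNReal.ofReal (((∫ ξ, ‖ξ‖ ^ (p + 2) * ‖F0 ξ‖ ^ 2 ∂μ) + ∫ ξ, ‖ξ‖ ^ p * ‖F1 ξ‖ ^ 2 ∂μ) ^ s) ≤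
      normMoment μ (energyDensity F0 F1) p ^ s := by
  rw [integral_norm_pow_mul_norm_sq hF0, integral_norm_pow_mul_norm_sq hF1,
    ← ENNReal.toReal_add hfin0.ne hfin1.ne, ← normMoment_energyDensity hF0, ENNReal.toReal_rpow]
  exact ENNReal.ofReal_toReal_le

lemma limsup_pohozhaev_le {μ : Measure E} {F0 : E → V} {F1 : E → W}
    (hF0 : AEStronglyMeasurable F0 μ) (hF1 : AEStronglyMeasurable F1 μ)
    (hfin0 : ∀ k, normMoment μ (‖F0 ·‖ₑ ^ 2) (2 * k) < ⊤)
    (hfin1 : ∀ k, normMoment μ (‖F1 ·‖ₑ ^ 2) (2 * k) < ⊤) :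
    limsup (fun j : ℕ => ENNReal.ofReal ((2 : ℝ) ^ j *
        ((∫ ξ, ‖ξ‖ ^ (4 * 2 ^ j + 2) * ‖F0 ξ‖ ^ 2 ∂μ) +
         (∫ ξ, ‖ξ‖ ^ (4 * 2 ^ j) * ‖F1 ξ‖ ^ 2 ∂μ)) ^ (-(1 : ℝ) / 2 ^ (j + 2)))) atTop ≤
      limsup (fun p : ℕ => p * normMoment μ (energyDensity F0 F1) p ^ (-(1 : ℝ) / p)) atTop := by
  have hsub : Tendsto (fun j : ℕ => 2 ^ (j + 2)) atTop (atTop : Filter ℕ) :=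
    (tendsto_pow_atTop_atTop_of_one_lt one_lt_two).comp (tendsto_add_atTop_nat 2)
  refine le_trans (limsup_le_limsup (Eventually.of_forall fun j => ?_))
    (limsup_le_limsup_of_le (u := fun p : ℕ => _) hsub)
  have horder : 4 * 2 ^ j = 2 ^ (j + 2) := by ring
  have hfactor : ENNReal.ofReal (2 ^ j) ≤ ((2 ^ (j + 2) : ℕ) : ℝ≥0∞) := by
    rw [← ENNReal.ofReal_natCast]
    push_cast
    gcongr <;> simp
  beta_reduce
  rw [horder, ENNReal.ofReal_mul (by positivity)]
  refine mul_le_mul' hfactor ?_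
  push_cast
  refine ofReal_add_integral_rpow_le hF0 hF1 ?_ ?_ _
  · convert hfin0 (2 ^ (j + 1) + 1) using 2
    ring
  · convert hfin1 (2 ^ (j + 1)) using 2
    ring

end Moments

section ManfrinBound

lemma exp_div_sq_mul_sq_le {p : ℕ} (hp : 2 ≤ p) {ρ t : ℝ} (hρ : 0 < ρ) (ht : ρ ≤ t) :
    Real.exp (p * ρ / t) / ρ ^ 2 * t ^ 2 ≤ (Real.exp 1 / ρ) ^ p * t ^ p := by
  have hexp : Real.exp (p * ρ / t) ≤ Real.exp 1 ^ p := by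
    rw [← Real.exp_nat_mul, mul_one, mul_div_assoc]
    gcongr
    exact mul_le_of_le_one_right p.cast_nonneg (div_le_one_of_le₀ ht (hρ.le.trans ht))
  have hpow : (t / ρ) ^ 2 ≤ (t / ρ) ^ p := pow_le_pow_right₀ ((one_le_div hρ).mpr ht) hp
  calc Real.exp (p * ρ / t) / ρ ^ 2 * t ^ 2
      = Real.exp (p * ρ / t) * (t / ρ) ^ 2 := by ring
    _ ≤ Real.exp 1 ^ p * (t / ρ) ^ p := by gcongr
    _ = (Real.exp 1 / ρ) ^ p * t ^ p := by ring

lemma div_pow_mul_le_one_of_lt_mul_rpow {p : ℕ} (hp : p ≠ 0) {δ M : ℝ≥0∞}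
    (h : δ < p * M ^ (-(1 : ℝ) / p)) : (δ / p) ^ p * M ≤ 1 := by
  have hroot : δ / p ≤ M ^ (-(1 : ℝ) / p) := ENNReal.div_le_of_le_mul' h.le
  calc (δ / p) ^ p * M
      ≤ (M ^ (-(1 : ℝ) / p)) ^ p * M := by gcongr
    _ = M⁻¹ * M := by
        rw [← ENNReal.rpow_natCast, ← ENNReal.rpow_mul,
          div_mul_cancel₀ _ (Nat.cast_ne_zero.mpr hp), ENNReal.rpow_neg_one]
    _ ≤ 1 := ENNReal.inv_mul_le_one M

variable {E : Type*} [SeminormedAddCommGroup E] [MeasurableSpace E] [OpensMeasurableSpace E]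

lemma setLIntegral_exp_le_normMoment (μ : Measure E) (w : E → ℝ≥0∞) {p : ℕ} (hp : 2 ≤ p) {ρ : ℝ}
    (hρ : 0 < ρ) :
    ∫⁻ ξ in {ξ | ρ ≤ ‖ξ‖}, ‖ξ‖ₑ ^ 2 * w ξ * ENNReal.ofReal (Real.exp (p * ρ / ‖ξ‖) / ρ ^ 2) ∂μ ≤
      ENNReal.ofReal (Real.exp 1 / ρ) ^ p * normMoment μ w p := by
  have hpointwise : ∀ ξ : E, ρ ≤ ‖ξ‖ →
      ‖ξ‖ₑ ^ 2 * w ξ * ENNReal.ofReal (Real.exp (p * ρ / ‖ξ‖) / ρ ^ 2) ≤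
        ENNReal.ofReal (Real.exp 1 / ρ) ^ p * (‖ξ‖ₑ ^ p * w ξ) := fun ξ hξ => by
    have hreal := ENNReal.ofReal_le_ofReal (exp_div_sq_mul_sq_le hp hρ hξ)
    rw [ENNReal.ofReal_mul (by positivity), ENNReal.ofReal_mul (by positivity),
      ENNReal.ofReal_pow (norm_nonneg _), ENNReal.ofReal_pow (norm_nonneg _),
      ENNReal.ofReal_pow (by positivity), ofReal_norm] at hreal
    rw [mul_right_comm, mul_comm (‖ξ‖ₑ ^ 2), ← mul_assoc]
    gcongr
  calc _ ≤ ∫⁻ ξ in {ξ | ρ ≤ ‖ξ‖}, ENNReal.ofReal (Real.exp 1 / ρ) ^ p * (‖ξ‖ₑ ^ p * w ξ) ∂μ :=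
        setLIntegral_mono' (measurableSet_le measurable_const continuous_norm.measurable) hpointwise
    _ ≤ ∫⁻ ξ, ENNReal.ofReal (Real.exp 1 / ρ) ^ p * (‖ξ‖ₑ ^ p * w ξ) ∂μ :=
        setLIntegral_le_lintegral _ _
    _ = ENNReal.ofReal (Real.exp 1 / ρ) ^ p * normMoment μ w p :=
        lintegral_const_mul' _ _ (ENNReal.pow_ne_top ENNReal.ofReal_ne_top)

lemma setLIntegral_exp_le_one {μ : Measure E} {w : E → ℝ≥0∞} {p : ℕ} (hp : 2 ≤ p) {δ : ℝ≥0}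
    (hδ : 0 < δ) (hM : δ < p * normMoment μ w p ^ (-(1 : ℝ) / p)) {ρ : ℝ}
    (hρ : ρ = Real.exp 1 * p / δ) :
    ∫⁻ ξ in {ξ | ρ ≤ ‖ξ‖},
      ‖ξ‖ₑ ^ 2 * w ξ * ENNReal.ofReal (Real.exp (δ / Real.exp 1 * ρ ^ 2 / ‖ξ‖) / ρ ^ 2) ∂μ ≤ 1 := by
  have hp_pos : 0 < p := by lia
  have hρ_pos : 0 < ρ := by rw [hρ]; positivity
  have hrate : δ / Real.exp 1 * ρ ^ 2 = p * ρ := by rw [hρ]; field_simp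
  have hbase : Real.exp 1 / ρ = δ / p := by rw [hρ]; field_simp
  have hbase_ofReal : ENNReal.ofReal (Real.exp 1 / ρ) = δ / p := by
    rw [hbase, ENNReal.ofReal_div_of_pos (by positivity), ENNReal.ofReal_coe_nnreal,
      ENNReal.ofReal_natCast]
  rw [hrate]
  refine (setLIntegral_exp_le_normMoment μ w hp hρ_pos).trans ?_
  rw [hbase_ofReal]
  exact div_pow_mul_le_one_of_lt_mul_rpow hp_pos.ne' hM

theorem pohozhaev_subset_manfrin_general {μ : Measure E} {w : E → ℝ≥0∞}
    (hP : 0 < limsup (fun p : ℕ => p * normMoment μ w p ^ (-(1 : ℝ) / p)) atTop) :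
    ∃ ρ : ℕ → ℝ, (∀ j, 0 < ρ j) ∧ Tendsto ρ atTop atTop ∧ ∃ η > (0 : ℝ), ∀ j,
      ∫⁻ ξ in {ξ | ρ j ≤ ‖ξ‖},
        ‖ξ‖ₑ ^ 2 * w ξ * ENNReal.ofReal (Real.exp (η * ρ j ^ 2 / ‖ξ‖) / ρ j ^ 2) ∂μ ≤ 1 := by
  obtain ⟨δ, hδ, hδP⟩ := ENNReal.lt_iff_exists_nnreal_btwn.mp hP
  have hδ_pos : 0 < δ := ENNReal.coe_pos.mp hδ
  have hfreq := (frequently_lt_of_lt_limsup (by isBoundedDefault) hδP).and_eventually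
    (eventually_ge_atTop 2)
  obtain ⟨φ, hφ, hφP⟩ := extraction_of_frequently_atTop hfreq
  refine ⟨fun j => Real.exp 1 * φ j / δ, fun j => ?_, ?_, δ / Real.exp 1, by positivity,
    fun j => setLIntegral_exp_le_one (hφP j).2 hδ_pos (hφP j).1 rfl⟩
  · have hφ_pos : 0 < φ j := two_pos.trans_le (hφP j).2
    positivity
  · have hφ_lim : Tendsto (fun j => (φ j : ℝ)) atTop atTop :=
      tendsto_natCast_atTop_atTop.comp hφ.tendsto_atTop
    exact (hφ_lim.const_mul_atTop (Real.exp_pos 1)).atTop_div_const hδ_pos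

end ManfrinBound

/-- the inclusion `𝒫 ⊂ ℬ_Δ` (Pohozhaev class is contained in
Manfrin's class), stated on the Fourier side: `F0 = f̂_0`, `F1 = f̂_1`. -/
theorem pohozhaev_subset_manfrin
    (n : ℕ) (hn : 1 ≤ n)
    (F0 F1 : EuclideanSpace ℝ (Fin n) → ℂ)
    (hm0 : AEMeasurable F0 (volume : Measure (EuclideanSpace ℝ (Fin n))))
    (hm1 : AEMeasurable F1 (volume : Measure (EuclideanSpace ℝ (Fin n))))
    -- f_0, f_1 ∈ H^σ(ℝⁿ) for every σ ≥ 0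
    (hHinf : ∀ σ : ℝ, 0 ≤ σ →
      (∫⁻ ξ, ENNReal.ofReal ((1 + ‖ξ‖ ^ 2) ^ σ) * (‖F0 ξ‖₊ : ℝ≥0∞) ^ 2 < ⊤) ∧
      (∫⁻ ξ, ENNReal.ofReal ((1 + ‖ξ‖ ^ 2) ^ σ) * (‖F1 ξ‖₊ : ℝ≥0∞) ^ 2 < ⊤))
    -- the Pohozhaev limsup condition
    (hP : 0 < Filter.limsup (fun j : ℕ => ENNReal.ofReal ((2:ℝ) ^ j *
        ((∫ ξ, ‖ξ‖ ^ (4 * 2 ^ j + 2) * ‖F0 ξ‖ ^ 2) +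
         (∫ ξ, ‖ξ‖ ^ (4 * 2 ^ j) * ‖F1 ξ‖ ^ 2)) ^ (-(1:ℝ) / 2 ^ (j + 2))))
      Filter.atTop) :
    -- conclusion: (f_0, f_1) ∈ ℬ_Δ
    ∃ ρ : ℕ → ℝ, (∀ j, 0 < ρ j) ∧ Filter.Tendsto ρ Filter.atTop Filter.atTop ∧
      ∃ η > (0:ℝ), ∃ C : ℝ≥0∞, C < ⊤ ∧ ∀ j : ℕ,
        (∫⁻ ξ in {ξ : EuclideanSpace ℝ (Fin n) | ρ j ≤ ‖ξ‖},
          ((‖ξ‖₊ : ℝ≥0∞) ^ 4 * (‖F0 ξ‖₊ : ℝ≥0∞) ^ 2 +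
           (‖ξ‖₊ : ℝ≥0∞) ^ 2 * (‖F1 ξ‖₊ : ℝ≥0∞) ^ 2) *
          ENNReal.ofReal (Real.exp (η * (ρ j) ^ 2 / ‖ξ‖) / (ρ j) ^ 2)) ≤ C := by
  obtain ⟨ρ, hρ, hlim, η, hη, hbound⟩ := pohozhaev_subset_manfrin_general <| hP.trans_le <|
    limsup_pohozhaev_le hm0.aestronglyMeasurable hm1.aestronglyMeasurable
      (fun k => normMoment_lt_top_of_sobolev (hHinf k k.cast_nonneg).1)
      (fun k => normMoment_lt_top_of_sobolev (hHinf k k.cast_nonneg).2)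
  simp only [enorm_sq_mul_energyDensity] at hbound
  exact ⟨ρ, hρ, hlim, η, hη, 1, ENNReal.one_lt_top, hbound⟩
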